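/- For all real numbers a₁, a₂ with −1 < a₁ < a₂ < 1, one has (1/π)·∫_{−1}^{a₁} ((a₁+a₂)/2 − ζ)·√(1−ζ²)/√((a₁−ζ)(a₂−ζ)) dζ + (1/π)·∫_{a₂}^{1} (ζ − (a₁+a₂)/2)·√(1−ζ²)/√((ζ−a₁)(ζ−a₂)) dζ = 1/2 − (a₂−a₁)²/8. -/

import Mathlib

open Real

/-!
Up to sign the integrand is `√(1 - ζ²)` times the derivative of `√P`, where
`P = (ζ - a₁) (ζ - a₂)`. The idea is to use the angle given by `tan² θ = P / (1 - ζ²)` as the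
variable: it runs over `[0, π / 2]` on each band, and for a given `θ` the two values of `ζ`, one in
each band, are the roots of `ζ² - (a₁ + a₂) cos² θ ζ + (1 + a₁ a₂) cos² θ - 1`. Each band separately
gives an elliptic integral, but the sum of the two integrands is symmetric in the two roots and
becomes a polynomial in `cos² θ`. The reflection `ζ ↦ -ζ` exchanges the two bands and replaces
`(a₁, a₂)` by `(-a₂, -a₁)`, so only the right band has to be parametrized.
-/

open Set

namespace Condensate

/-- The discriminant of the quadratic `z² - (a + b) c z + (1 + a b) c - 1`, which is
`c (z - a) (z - b) - (1 - c) (1 - z²)`. -/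
noncomputable def pencilDiscrim (a b c : ℝ) : ℝ :=
  discrim 1 (-((a + b) * c)) ((1 + a * b) * c - 1)

/-- The larger root of the quadratic `c (z - a) (z - b) - (1 - c) (1 - z²)`. For `c` from `1` to `0`
it runs through the band `[b, 1]`; with `c = cos² θ` it parametrizes the band by the angle `θ`. -/
noncomputable def pencilRoot (a b c : ℝ) : ℝ :=
  ((a + b) * c + √(pencilDiscrim a b c)) / 2

/-- The integrand of the averaged density on the band `[b, 1]`, without the factor `1 / π`. -/
noncomputable def bandIntegrand (a b ζ : ℝ) : ℝ :=
  (ζ - (a + b) / 2) * √(1 - ζ ^ 2) / √((ζ - a) * (ζ - b))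

/-- The integrand `bandIntegrand` in the angular variable `θ`, Jacobian included. -/
noncomputable def angularIntegrand (a b θ : ℝ) : ℝ :=
  cos θ ^ 2 * (1 + a * b - (a + b) * pencilRoot a b (cos θ ^ 2)) *
    (1 - (a + b) * sin θ ^ 2 / √(pencilDiscrim a b (cos θ ^ 2)))

variable {a b c θ : ℝ}

lemma pencilDiscrim_eq (a b c : ℝ) :
    pencilDiscrim a b c = (b - a) ^ 2 * c ^ 2 + 4 * (1 - c) * (1 - a * b * c) := by
  simp only [pencilDiscrim, discrim]
  ring

lemma pencilDiscrim_pos (hab : a ≠ b) (hab1 : a * b < 1) (hc : c ∈ Icc 0 1) :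
    0 < pencilDiscrim a b c := by
  obtain ⟨hc0, hc1⟩ := hc
  have hsub : 0 < (b - a) ^ 2 := by
    have := sub_ne_zero.2 hab.symm
    positivity
  rw [pencilDiscrim_eq]
  rcases hc1.eq_or_lt with rfl | hc1
  · simpa using hsub
  · have hlead : 0 < 4 * (1 - c) := by linarith
    have habc : 0 < 1 - a * b * c := by nlinarith
    exact add_pos_of_nonneg_of_pos (by positivity) (mul_pos hlead habc)

lemma pencilDiscrim_neg_neg (a b c : ℝ) : pencilDiscrim (-b) (-a) c = pencilDiscrim a b c := by
  simp only [pencilDiscrim_eq]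
  ring

lemma pencilRoot_neg_neg (a b c : ℝ) :
    pencilRoot (-b) (-a) c = pencilRoot a b c - (a + b) * c := by
  simp only [pencilRoot, pencilDiscrim_neg_neg]
  ring

lemma sqrt_pencilDiscrim (a b c : ℝ) :
    √(pencilDiscrim a b c) = 2 * pencilRoot a b c - (a + b) * c := by
  simp only [pencilRoot]
  ring

lemma pencilRoot_zero (a b : ℝ) : pencilRoot a b 0 = 1 := by
  have h4 : pencilDiscrim a b 0 = 2 ^ 2 := by rw [pencilDiscrim_eq]; norm_num
  simp [pencilRoot, h4]

lemma pencilRoot_one (hab : a ≤ b) : pencilRoot a b 1 = b := by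
  have hsq : pencilDiscrim a b 1 = (b - a) ^ 2 := by rw [pencilDiscrim_eq]; ring
  rw [pencilRoot, hsq, sqrt_sq (sub_nonneg.2 hab)]
  ring

lemma one_sub_pencilRoot_sq (h : 0 ≤ pencilDiscrim a b c) :
    1 - pencilRoot a b c ^ 2 = c * (1 + a * b - (a + b) * pencilRoot a b c) := by
  have hsq := mul_self_sqrt h
  have hroot := (quadratic_eq_zero_iff one_ne_zero hsq.symm (pencilRoot a b c)).2
    (.inl (by simp [pencilRoot]))
  linear_combination -hroot

lemma pencilRoot_sub_mul_sub (h : 0 ≤ pencilDiscrim a b c) :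
    (pencilRoot a b c - a) * (pencilRoot a b c - b) =
      (1 - c) * (1 + a * b - (a + b) * pencilRoot a b c) := by
  linear_combination -one_sub_pencilRoot_sq h

lemma add_mul_pencilRoot_lt (ha : a ∈ Ioo (-1) 1) (hb : b ∈ Ioo (-1) 1) (hc : c ∈ Icc 0 1)
    (h : 0 ≤ pencilDiscrim a b c) : (a + b) * pencilRoot a b c < 1 + a * b := by
  obtain ⟨ha0, ha1⟩ := ha
  obtain ⟨hb0, hb1⟩ := hb
  obtain ⟨hc0, hc1⟩ := hc
  have hsq := one_sub_pencilRoot_sq h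
  have hprod := pencilRoot_sub_mul_sub h
  set z := pencilRoot a b c
  -- Otherwise `z` would lie between `a` and `b`, yet outside `(-1, 1)`.
  by_contra! hle
  have hz : 1 ≤ z ^ 2 := by nlinarith
  have hz_between : (z - a) * (z - b) ≤ 0 := by nlinarith
  rcases le_abs'.1 ((one_le_sq_iff_one_le_abs z).1 hz) with hz | hz <;> nlinarith

lemma hasDerivAt_pencilRoot (h : 0 < pencilDiscrim a b c) :
    HasDerivAt (pencilRoot a b)
      (-(1 + a * b - (a + b) * pencilRoot a b c) / √(pencilDiscrim a b c)) c := by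
  have hlin : HasDerivAt (fun c : ℝ => (a + b) * c) (a + b) c := by
    simpa using (hasDerivAt_id c).const_mul (a + b)
  have hdiscrim : HasDerivAt (pencilDiscrim a b) (2 * (a + b) ^ 2 * c - 4 * (1 + a * b)) c := by
    have hconst : HasDerivAt (fun c : ℝ => (1 + a * b) * c - 1) (1 + a * b) c := by
      simpa using ((hasDerivAt_id c).const_mul (1 + a * b)).sub_const 1
    refine ((hlin.neg.pow 2).sub (hconst.const_mul (4 * 1))).congr_deriv ?_
    simp only [Nat.cast_ofNat, Pi.neg_apply]
    ring
  refine ((hlin.add (hdiscrim.sqrt h.ne')).div_const 2).congr_deriv ?_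
  have := (sqrt_pos.2 h).ne'
  simp only [pencilRoot]
  field_simp
  ring

lemma cos_sq_mem_Icc (θ : ℝ) : cos θ ^ 2 ∈ Icc 0 1 := ⟨sq_nonneg _, cos_sq_le_one θ⟩

lemma pencilDiscrim_cos_sq_pos (ha : -1 < a) (hab : a < b) (hb : b < 1) (θ : ℝ) :
    0 < pencilDiscrim a b (cos θ ^ 2) :=
  pencilDiscrim_pos hab.ne (by nlinarith) (cos_sq_mem_Icc θ)

lemma hasDerivAt_pencilRoot_cos_sq (h : 0 < pencilDiscrim a b (cos θ ^ 2)) :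
    HasDerivAt (fun θ => pencilRoot a b (cos θ ^ 2))
      (2 * sin θ * cos θ * (1 + a * b - (a + b) * pencilRoot a b (cos θ ^ 2)) /
        √(pencilDiscrim a b (cos θ ^ 2))) θ := by
  refine ((hasDerivAt_pencilRoot h).comp θ ((hasDerivAt_cos θ).pow 2)).congr_deriv ?_
  push_cast
  ring

lemma deriv_pencilRoot_cos_sq_nonneg (ha : a ∈ Ioo (-1) 1) (hb : b ∈ Ioo (-1) 1)
    (h : 0 < pencilDiscrim a b (cos θ ^ 2)) (hθ : θ ∈ Icc 0 (π / 2)) :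
    0 ≤ deriv (fun θ => pencilRoot a b (cos θ ^ 2)) θ := by
  have hsin : 0 ≤ sin θ := sin_nonneg_of_nonneg_of_le_pi hθ.1 (by linarith [hθ.2, pi_pos])
  have hcos : 0 ≤ cos θ := cos_nonneg_of_mem_Icc ⟨by linarith [hθ.1, pi_pos], hθ.2⟩
  have hL := sub_pos.2 (add_mul_pencilRoot_lt ha hb (cos_sq_mem_Icc θ) h.le)
  rw [(hasDerivAt_pencilRoot_cos_sq h).deriv]
  positivity

lemma bandIntegrand_pencilRoot_mul_deriv (ha : a ∈ Ioo (-1) 1) (hb : b ∈ Ioo (-1) 1)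
    (h : 0 < pencilDiscrim a b (cos θ ^ 2)) (hθ : θ ∈ Ioo 0 (π / 2)) :
    bandIntegrand a b (pencilRoot a b (cos θ ^ 2)) *
        deriv (fun θ => pencilRoot a b (cos θ ^ 2)) θ =
      angularIntegrand a b θ := by
  have hsin : 0 < sin θ := sin_pos_of_pos_of_lt_pi hθ.1 (by linarith [hθ.2, pi_pos])
  have hcos : 0 < cos θ := cos_pos_of_mem_Ioo ⟨by linarith [hθ.1, pi_pos], hθ.2⟩
  have hL := sub_pos.2 (add_mul_pencilRoot_lt ha hb (cos_sq_mem_Icc θ) h.le)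
  have hsqrt_one_sub : √(1 - pencilRoot a b (cos θ ^ 2) ^ 2) =
      cos θ * √(1 + a * b - (a + b) * pencilRoot a b (cos θ ^ 2)) := by
    rw [one_sub_pencilRoot_sq h.le, sqrt_mul (sq_nonneg _), sqrt_sq hcos.le]
  have hsqrt_prod : √((pencilRoot a b (cos θ ^ 2) - a) * (pencilRoot a b (cos θ ^ 2) - b)) =
      sin θ * √(1 + a * b - (a + b) * pencilRoot a b (cos θ ^ 2)) := by
    rw [pencilRoot_sub_mul_sub h.le, ← sin_sq, sqrt_mul (sq_nonneg _), sqrt_sq hsin.le]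
  rw [(hasDerivAt_pencilRoot_cos_sq h).deriv, bandIntegrand, angularIntegrand, hsqrt_one_sub,
    hsqrt_prod]
  have hD := (sqrt_pos.2 h).ne'
  have hsqrtL := (sqrt_pos.2 hL).ne'
  set L := 1 + a * b - (a + b) * pencilRoot a b (cos θ ^ 2)
  field_simp
  rw [sqrt_pencilDiscrim, sin_sq]
  ring

lemma integral_bandIntegrand (ha : -1 < a) (hab : a < b) (hb : b < 1) :
    ∫ ζ in b..1, bandIntegrand a b ζ = ∫ θ in 0..π / 2, angularIntegrand a b θ := by
  have ha' : a ∈ Ioo (-1) 1 := ⟨ha, hab.trans hb⟩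
  have hb' : b ∈ Ioo (-1) 1 := ⟨ha.trans hab, hb⟩
  have hD := pencilDiscrim_cos_sq_pos ha hab hb
  have hderiv θ : HasDerivAt (fun θ => pencilRoot a b (cos θ ^ 2))
      (deriv (fun θ => pencilRoot a b (cos θ ^ 2)) θ) θ :=
    (hasDerivAt_pencilRoot_cos_sq (hD θ)).differentiableAt.hasDerivAt
  have hpi : 0 ≤ π / 2 := by positivity
  have hsubst := intervalIntegral.integral_comp_mul_deriv_of_deriv_nonneg
    (g := bandIntegrand a b) (a := 0) (b := π / 2)
    (fun θ _ => (hderiv θ).continuousAt.continuousWithinAt) (fun θ _ => hderiv θ)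
    (fun θ hθ => by
      rw [min_eq_left hpi, max_eq_right hpi] at hθ
      exact deriv_pencilRoot_cos_sq_nonneg ha' hb' (hD θ) (Ioo_subset_Icc_self hθ))
  simp only [cos_zero, cos_pi_div_two, one_pow, pencilRoot_one hab.le, zero_pow two_ne_zero,
    pencilRoot_zero] at hsubst
  rw [← hsubst]
  exact intervalIntegral.integral_congr_Ioo_of_le hpi fun θ hθ =>
    bandIntegrand_pencilRoot_mul_deriv ha' hb' (hD θ) hθ

lemma continuous_angularIntegrand (ha : -1 < a) (hab : a < b) (hb : b < 1) :
    Continuous (angularIntegrand a b) := by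
  have hD := pencilDiscrim_cos_sq_pos ha hab hb
  have hroot : Continuous fun θ => pencilRoot a b (cos θ ^ 2) :=
    continuous_iff_continuousAt.2 fun θ => (hasDerivAt_pencilRoot_cos_sq (hD θ)).continuousAt
  have hsqrt : Continuous fun θ => √(pencilDiscrim a b (cos θ ^ 2)) := by
    simp only [sqrt_pencilDiscrim]
    fun_prop
  have hne θ : √(pencilDiscrim a b (cos θ ^ 2)) ≠ 0 := (sqrt_pos.2 (hD θ)).ne'
  unfold angularIntegrand
  fun_prop (disch := assumption)

lemma angularIntegrand_add_angularIntegrand_neg_neg (h : 0 < pencilDiscrim a b (cos θ ^ 2)) :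
    angularIntegrand (-b) (-a) θ + angularIntegrand a b θ =
      cos θ ^ 2 * (2 * (1 + a * b) - (a + b) ^ 2 * cos (2 * θ)) := by
  have hD := (sqrt_pos.2 h).ne'
  rw [angularIntegrand, angularIntegrand, pencilDiscrim_neg_neg, pencilRoot_neg_neg, cos_two_mul,
    sin_sq, pencilRoot]
  field_simp
  ring

lemma integral_cos_sq_mul_sub_mul_cos_two_mul (A B : ℝ) :
    ∫ θ in 0..π / 2, cos θ ^ 2 * (A - B * cos (2 * θ)) = π / 8 * (2 * A - B) := by
  have hexpand θ : cos θ ^ 2 * (A - B * cos (2 * θ)) =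
      (A - B) * cos θ ^ 2 + 2 * B * (sin θ ^ 2 * cos θ ^ 2) := by
    rw [cos_two_mul, sin_sq]
    ring
  have hsin : sin (4 * (π / 2)) = 0 := by rw [show 4 * (π / 2) = 2 * π by ring, sin_two_pi]
  simp only [hexpand]
  rw [intervalIntegral.integral_add ((by fun_prop : Continuous _).intervalIntegrable _ _)
      ((by fun_prop : Continuous _).intervalIntegrable _ _),
    intervalIntegral.integral_const_mul, intervalIntegral.integral_const_mul, integral_cos_sq,
    integral_sin_sq_mul_cos_sq, hsin]
  simp only [cos_pi_div_two, sin_zero, mul_zero]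
  ring

lemma integral_left_band_eq_integral_bandIntegrand (a b : ℝ) :
    ∫ ζ in (-1)..a, ((a + b) / 2 - ζ) * √(1 - ζ ^ 2) / √((a - ζ) * (b - ζ)) =
      ∫ ζ in -a..1, bandIntegrand (-b) (-a) ζ := by
  rw [← neg_neg a, ← intervalIntegral.integral_comp_neg, neg_neg]
  refine intervalIntegral.integral_congr fun ζ _ => ?_
  simp only [bandIntegrand]
  ring_nf

lemma integral_bandIntegrand_add_neg_neg (ha : -1 < a) (hab : a < b) (hb : b < 1) :
    (∫ ζ in -a..1, bandIntegrand (-b) (-a) ζ) + ∫ ζ in b..1, bandIntegrand a b ζ =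
      π / 8 * (4 - (b - a) ^ 2) := by
  have hb' : -1 < -b := neg_lt_neg hb
  have hab' : -b < -a := neg_lt_neg hab
  have ha' : -a < 1 := by linarith
  calc
    _ = ∫ θ in 0..π / 2, (angularIntegrand (-b) (-a) θ + angularIntegrand a b θ) := by
      rw [integral_bandIntegrand hb' hab' ha', integral_bandIntegrand ha hab hb,
        intervalIntegral.integral_add
          ((continuous_angularIntegrand hb' hab' ha').intervalIntegrable _ _)
          ((continuous_angularIntegrand ha hab hb).intervalIntegrable _ _)]
    _ = ∫ θ in 0..π / 2, cos θ ^ 2 * (2 * (1 + a * b) - (a + b) ^ 2 * cos (2 * θ)) :=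
      intervalIntegral.integral_congr fun θ _ =>
        angularIntegrand_add_angularIntegrand_neg_neg (pencilDiscrim_cos_sq_pos ha hab hb θ)
    _ = π / 8 * (4 - (b - a) ^ 2) := by
      rw [integral_cos_sq_mul_sub_mul_cos_two_mul]
      ring

end Condensate

/-- For all `−1 < a₁ < a₂ < 1`,
`(1/π)∫_{−1}^{a₁} ((a₁+a₂)/2 − ζ)√(1−ζ²)/√((a₁−ζ)(a₂−ζ)) dζ
 + (1/π)∫_{a₂}^{1} (ζ − (a₁+a₂)/2)√(1−ζ²)/√((ζ−a₁)(ζ−a₂)) dζ = 1/2 − (a₂−a₁)²/8`. -/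
theorem genus_zero_average_density (a₁ a₂ : ℝ)
    (h1 : -1 < a₁) (h2 : a₁ < a₂) (h3 : a₂ < 1) :
    (1 / π) * (∫ ζ in (-1 : ℝ)..a₁,
        ((a₁ + a₂) / 2 - ζ) * Real.sqrt (1 - ζ ^ 2) / Real.sqrt ((a₁ - ζ) * (a₂ - ζ)))
      + (1 / π) * (∫ ζ in a₂..(1 : ℝ),
        (ζ - (a₁ + a₂) / 2) * Real.sqrt (1 - ζ ^ 2) / Real.sqrt ((ζ - a₁) * (ζ - a₂)))
      = 1 / 2 - (a₂ - a₁) ^ 2 / 8 := by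
  have hsum := Condensate.integral_bandIntegrand_add_neg_neg h1 h2 h3
  rw [← Condensate.integral_left_band_eq_integral_bandIntegrand] at hsum
  simp only [Condensate.bandIntegrand] at hsum
  rw [← mul_add, hsum]
  field_simp
  ring
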